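/- Let D ⊂ ℂⁿ be a bounded hyperconvex domain. Then D does not have the punctured disc property; that is, there is no proper holomorphic map from the punctured closed unit disc 𝔻* = {z ∈ ℂ : 0 < |z| ≤ 1} to D. -/

import Mathlib

open MeasureTheory

/-- `ρ` is plurisubharmonic on `D`: upper semicontinuous and satisfying the sub-mean-value
inequality along every complex line, on every closed disc contained in `D`. -/
def PlurisubharmonicOn (n : ℕ) (ρ : (Fin n → ℂ) → ℝ) (D : Set (Fin n → ℂ)) : Prop :=
  UpperSemicontinuousOn ρ D ∧
  ∀ a b : Fin n → ℂ, ∀ r : ℝ, 0 < r →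
    (∀ t : ℂ, ‖t‖ ≤ r → a + t • b ∈ D) →
    ρ a ≤ (1 / (2 * Real.pi)) *
      ∫ θ in (0:ℝ)..(2 * Real.pi), ρ (a + ((r : ℂ) * Complex.exp (θ * Complex.I)) • b)

/-- `D` is hyperconvex: it admits a negative plurisubharmonic exhaustion function. -/
def Hyperconvex (n : ℕ) (D : Set (Fin n → ℂ)) : Prop :=
  ∃ ρ : (Fin n → ℂ) → ℝ, PlurisubharmonicOn n ρ D ∧ (∀ z ∈ D, ρ z < 0) ∧
    ∀ c : ℝ, c < 0 → IsCompact {z ∈ D | ρ z ≤ c}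

/-- The punctured closed unit disc `𝔻* = {z ∈ ℂ : 0 < |z| ≤ 1}`. -/
def puncturedDisc : Set ℂ := Metric.closedBall 0 1 \ {0}

/-- `D` has the punctured disc property: there is a proper holomorphic map `𝔻* → D`
(holomorphic on the open punctured disc, continuous on `𝔻*`). -/
def HasPDP (n : ℕ) (D : Set (Fin n → ℂ)) : Prop :=
  ∃ h : ℂ → (Fin n → ℂ),
    DifferentiableOn ℂ h (Metric.ball 0 1 \ {0}) ∧
    ContinuousOn h puncturedDisc ∧
    Set.MapsTo h puncturedDisc D ∧
    ∀ K : Set (Fin n → ℂ), K ⊆ D → IsCompact K →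
      IsCompact (puncturedDisc ∩ h ⁻¹' K)

/-!
Let `ρ` be a negative plurisubharmonic exhaustion of `D` and `h : 𝔻* → D` a proper holomorphic map.
Compactness of the sublevel sets makes `ρ` continuous. By definition `ρ` is subharmonic on affine
discs only, so the maximum principle for `ρ ∘ h + g`, with `g` harmonic, is obtained by doubling
variables: at a maximum point of `ρ (h z + v) - K ‖v‖² + g z + η ‖z‖²` one can let `v` depend on `z`
so that `h z + v` runs through an affine disc. With `g = ε log ‖z‖` on the annuli `δ < ‖z‖ < 1`,
letting `δ → 0` and then `ε → 0` shows that `ρ ∘ h` is bounded on `𝔻*` by its maximum on the unit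
circle, which is negative. Hence `𝔻*` is the preimage of a compact sublevel set of `ρ`, although it
is not compact.
-/

open scoped ComplexConjugate
open Complex Filter InnerProductSpace Metric Set Topology
open Real (circleAverage circleAverage_congr_sphere circleAverage_const circleAverage_fun_add
  circleAverage_fun_smul circleAverage_mono circleAverage_mono_on_of_le_circle)

/-- Subharmonicity at a point in the sense of Blaschke and Privalov: the lower generalized Laplacian
`liminf_{r → 0} 4 r⁻² (circleAverage u z r - u z)` is nonnegative. It needs no derivative
of `u` and tolerates the `o(r²)` remainder of a Taylor expansion. Integrability is required because
`circleAverage` is `0` otherwise. -/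
def PrivalovSubharmonicAt (u : ℂ → ℝ) (z : ℂ) : Prop :=
  ∀ η > 0, ∀ᶠ r in 𝓝[>] (0 : ℝ),
    CircleIntegrable u z r ∧ u z ≤ circleAverage u z r + η * r ^ 2

lemma eventually_forall_closedBall {X : Type*} [PseudoMetricSpace X] {x : X} {p : X → Prop}
    (hp : ∀ᶠ y in 𝓝 x, p y) : ∀ᶠ r in 𝓝[>] (0 : ℝ), ∀ y ∈ closedBall x r, p y :=
  ((tendsto_closedBall_smallSets x).eventually (eventually_smallSets_forall.2 hp)).filter_mono
    nhdsWithin_le_nhds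

lemma eventually_circleIntegrable {u : ℂ → ℝ} {z : ℂ} (hu : ∀ᶠ w in 𝓝 z, ContinuousAt u w) :
    ∀ᶠ r in 𝓝[>] (0 : ℝ), CircleIntegrable u z r := by
  filter_upwards [eventually_forall_closedBall hu, self_mem_nhdsWithin] with r hcont hr
  exact ContinuousOn.circleIntegrable (le_of_lt hr) fun w hw =>
    (hcont w (sphere_subset_closedBall hw)).continuousWithinAt

lemma circleAverage_norm_sq (c : ℂ) (r : ℝ) :
    circleAverage (fun w => ‖w‖ ^ 2) c r = ‖c‖ ^ 2 + r ^ 2 := by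
  let linearization : ℂ → ℂ := fun w => (‖c‖ ^ 2 + r ^ 2 : ℝ) + (2 : ℝ) * (conj c * (w - c))
  have harmonic : HarmonicOnNhd (fun w => (linearization w).re) (closedBall c |r|) :=
    fun w _ => AnalyticAt.harmonicAt_re (by fun_prop)
  have eqOn_sphere : EqOn (fun w => ‖w‖ ^ 2) (fun w => (linearization w).re) (sphere c |r|) := by
    intro w hw
    have hr : ‖w - c‖ ^ 2 = r ^ 2 := by rw [mem_sphere_iff_norm.1 hw, sq_abs]
    have expansion := norm_add_sq_real c (w - c)
    rw [add_sub_cancel, hr, Complex.inner] at expansion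
    simp only [linearization, add_re, ofReal_re, re_ofReal_mul, mul_comm (conj c), expansion]
    ring
  rw [circleAverage_congr_sphere eqOn_sphere,
    InnerProductSpace.HarmonicOnNhd.circleAverage_eq harmonic]
  simp only [linearization, sub_self, mul_zero, add_zero, ofReal_re]

namespace PrivalovSubharmonicAt

variable {u v : ℂ → ℝ} {z : ℂ}

lemma of_harmonicAt (hu : HarmonicAt u z) : PrivalovSubharmonicAt u z := by
  intro η hη
  filter_upwards [eventually_forall_closedBall hu.eventually, self_mem_nhdsWithin,
    eventually_circleIntegrable (hu.eventually.mono fun w hw => hw.1.continuousAt)]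
    with r harmonic hr hint
  have mean_value : circleAverage u z r = u z :=
    InnerProductSpace.HarmonicOnNhd.circleAverage_eq (by rwa [abs_of_pos hr])
  exact ⟨hint, by rw [mean_value]; exact le_add_of_nonneg_right (by positivity)⟩

lemma of_isLittleO (hcont : ∀ᶠ w in 𝓝 z, ContinuousAt u w)
    (hu : u =o[𝓝 z] fun w => ‖w - z‖ ^ 2) : PrivalovSubharmonicAt u z := by
  intro η hη
  have hz : u z = 0 := by simpa using (hu.bound one_pos).self_of_nhds
  filter_upwards [eventually_forall_closedBall (hu.bound hη), self_mem_nhdsWithin,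
    eventually_circleIntegrable hcont] with r hbound hr hint
  have lower_bound : ∀ w ∈ sphere z |r|, -(η * r ^ 2) ≤ u w := by
    intro w hw
    rw [abs_of_pos hr] at hw
    have := hbound w (sphere_subset_closedBall hw)
    rw [mem_sphere_iff_norm.1 hw, Real.norm_of_nonneg (sq_nonneg r)] at this
    exact neg_le_of_abs_le this
  have := circleAverage_mono (circleIntegrable_const _ z r) hint lower_bound
  rw [circleAverage_const] at this
  exact ⟨hint, by linarith⟩

lemma add (hu : PrivalovSubharmonicAt u z) (hv : PrivalovSubharmonicAt v z) :
    PrivalovSubharmonicAt (fun w => u w + v w) z := by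
  intro η hη
  filter_upwards [hu (η / 2) (half_pos hη), hv (η / 2) (half_pos hη)]
    with r ⟨hu_int, hu_le⟩ ⟨hv_int, hv_le⟩
  refine ⟨hu_int.add hv_int, ?_⟩
  rw [circleAverage_fun_add hu_int hv_int]
  linarith

lemma const_mul {a : ℝ} (ha : 0 ≤ a) (hu : PrivalovSubharmonicAt u z) :
    PrivalovSubharmonicAt (fun w => a * u w) z := by
  intro η hη
  filter_upwards [hu (η / (a + 1)) (by positivity)] with r ⟨hint, hle⟩
  refine ⟨hint.const_smul (a := a), ?_⟩
  have haη : a * (η / (a + 1)) ≤ η := by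
    rw [mul_div_left_comm]
    exact mul_le_of_le_one_right hη.le (div_le_one_of_le₀ (by linarith) (by positivity))
  calc a * u z ≤ a * (circleAverage u z r + η / (a + 1) * r ^ 2) := by gcongr
    _ = a * circleAverage u z r + a * (η / (a + 1)) * r ^ 2 := by ring
    _ ≤ a * circleAverage u z r + η * r ^ 2 := by gcongr
    _ = circleAverage (fun w => a * u w) z r + η * r ^ 2 := by
      rw [← smul_eq_mul, ← circleAverage_fun_smul]; rfl

lemma sum {ι : Type*} (s : Finset ι) {f : ι → ℂ → ℝ}
    (hf : ∀ i ∈ s, PrivalovSubharmonicAt (f i) z) :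
    PrivalovSubharmonicAt (fun w => ∑ i ∈ s, f i w) z := by
  classical
  induction s using Finset.induction_on with
  | empty => simpa using of_harmonicAt (harmonicAt_const (0 : ℝ))
  | insert i s hi ih =>
    simp only [Finset.sum_insert hi]
    exact (hf i (s.mem_insert_self i)).add
      (ih fun j hj => hf j (Finset.mem_insert_of_mem hj))

-- `‖f‖²` has Laplacian `4 ‖f'‖²`.
lemma neg_norm_sq_of_deriv_eq_zero {f : ℂ → ℂ} (hf : AnalyticAt ℂ f z) (hf' : deriv f z = 0) :
    PrivalovSubharmonicAt (fun w => -‖f w‖ ^ 2) z := by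
  have harmonic : HarmonicAt (fun w => (conj (f z) * (f z - 2 * f w)).re) z :=
    AnalyticAt.harmonicAt_re (by fun_prop)
  have hcont : ∀ᶠ w in 𝓝 z, ContinuousAt (fun w => -‖f w - f z‖ ^ 2) w :=
    hf.eventually_continuousAt.mono fun w hw => by fun_prop
  have hlittle : (fun w => f w - f z) =o[𝓝 z] fun w => w - z := by
    simpa [hf'] using hf.differentiableAt.hasDerivAt.isLittleO
  have remainder : (fun w => -‖f w - f z‖ ^ 2) =o[𝓝 z] fun w => ‖w - z‖ ^ 2 :=
    (hlittle.norm_norm.pow two_pos).neg_left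
  convert (of_harmonicAt harmonic).add (of_isLittleO hcont remainder) using 2 with w
  have expansion := norm_sub_sq_real (f w) (f z)
  rw [Complex.inner] at expansion
  simp only [expansion, Complex.sq_norm (f z), normSq_apply, mul_re, mul_im, conj_re,
    conj_im, sub_re, sub_im, re_ofNat, im_ofNat]
  ring

theorem not_isLocalMax_add_norm_sq (hu : PrivalovSubharmonicAt u z) {η : ℝ} (hη : 0 < η) :
    ¬ IsLocalMax (fun w => u w + η * ‖w‖ ^ 2) z := by
  intro hmax
  obtain ⟨r, ⟨hint, hle⟩, hr, hball⟩ := ((hu (η / 2) (half_pos hη)).and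
    (eventually_mem_nhdsWithin.and (eventually_forall_closedBall hmax))).exists
  have hr : 0 < r := hr
  have hsq_int : CircleIntegrable (fun w : ℂ => η * ‖w‖ ^ 2) z r :=
    ContinuousOn.circleIntegrable hr.le (by fun_prop)
  have average_le : circleAverage (fun w => u w + η * ‖w‖ ^ 2) z r ≤ u z + η * ‖z‖ ^ 2 :=
    circleAverage_mono_on_of_le_circle (hint.add hsq_int) fun w hw =>
      hball w (sphere_subset_closedBall (by rwa [abs_of_pos hr] at hw))
  have average_eq : circleAverage (fun w => u w + η * ‖w‖ ^ 2) z r =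
      circleAverage u z r + η * (‖z‖ ^ 2 + r ^ 2) := by
    rw [circleAverage_fun_add hint hsq_int, ← circleAverage_norm_sq, ← smul_eq_mul (a := η),
      ← circleAverage_fun_smul]
    rfl
  nlinarith [sq_pos_of_pos hr, mul_pos hη (sq_pos_of_pos hr)]

end PrivalovSubharmonicAt

section PseudoMetricSpace

variable {X : Type*} [PseudoMetricSpace X] (x : X) (r R : ℝ)

lemma closure_ball_sdiff_closedBall_subset :
    closure (ball x R \ closedBall x r) ⊆ closedBall x R \ ball x r :=
  closure_minimal (sdiff_subset_sdiff ball_subset_closedBall ball_subset_closedBall)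
    (isClosed_closedBall.sdiff isOpen_ball)

lemma frontier_ball_sdiff_closedBall_subset :
    frontier (ball x R \ closedBall x r) ⊆ sphere x R ∪ sphere x r := by
  rw [(isOpen_ball.sdiff isClosed_closedBall).frontier_eq]
  rintro y ⟨hcl, hy⟩
  have := closure_ball_sdiff_closedBall_subset x r R hcl
  simp only [Set.mem_sdiff, mem_ball, mem_closedBall, mem_union, mem_sphere] at this hy ⊢
  grind

end PseudoMetricSpace

lemma pi_norm_sq_le_sum_norm_sq {ι : Type*} [Fintype ι] {E : ι → Type*}
    [∀ i, SeminormedAddCommGroup (E i)] (v : ∀ i, E i) : ‖v‖ ^ 2 ≤ ∑ i, ‖v i‖ ^ 2 := by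
  rw [← Real.le_sqrt (norm_nonneg v) (Finset.sum_nonneg fun _ _ => sq_nonneg _),
    pi_norm_le_iff_of_nonneg (Real.sqrt_nonneg _)]
  exact fun i => Real.le_sqrt_of_sq_le <|
    Finset.single_le_sum (f := fun i => ‖v i‖ ^ 2) (fun _ _ => sq_nonneg _) (Finset.mem_univ i)

lemma exists_pos_forall_norm_le_add_mem_and_lt {X : Type*} [SeminormedAddCommGroup X]
    {D K : Set X} {ρ : X → ℝ} (hD : IsOpen D) (hρ : ContinuousOn ρ D) (hK : IsCompact K)
    (hKD : K ⊆ D) {γ : ℝ} (hγ : 0 < γ) :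
    ∃ s > 0, ∀ x ∈ K, ∀ v, ‖v‖ ≤ s → x + v ∈ D ∧ ρ (x + v) < ρ x + γ := by
  obtain ⟨s₁, hs₁, hdist⟩ := mem_uniformity_dist.1 <| hK.uniformContinuousAt_of_continuousAt ρ
    (fun x hx => hρ.continuousAt (hD.mem_nhds (hKD hx))) (dist_mem_uniformity hγ)
  obtain ⟨s₂, hs₂, hthick⟩ := hK.exists_cthickening_subset_open hD hKD
  refine ⟨min (s₁ / 2) s₂, lt_min (half_pos hs₁) hs₂, fun x hx v hv => ⟨hthick ?_, ?_⟩⟩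
  · exact mem_cthickening_of_dist_le _ x _ _ hx (by simpa using hv.trans (min_le_right _ _))
  · have hv₁ : dist x (x + v) < s₁ := by
      simpa using (hv.trans (min_le_left _ _)).trans_lt (half_lt_self hs₁)
    have hρ_dist : |ρ x - ρ (x + v)| < γ := hdist hv₁ hx
    have := (abs_lt.1 hρ_dist).1
    linarith

/-- The doubled function of the maximum principle for `ρ ∘ h + g`: the point `h z` at which `ρ` is
evaluated may be moved by a vector `v` at the cost `K * ∑ i, ‖v i‖ ^ 2`, and the term `η * ‖z‖ ^ 2`
makes the dependence on `z` strictly subharmonic. -/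
noncomputable def penalizedSum {ι : Type*} [Fintype ι] (ρ : (ι → ℂ) → ℝ) (h : ℂ → ι → ℂ) (g : ℂ → ℝ)
    (K η : ℝ) (p : ℂ × (ι → ℂ)) : ℝ :=
  ρ (h p.1 + p.2) - K * ∑ i, ‖p.2 i‖ ^ 2 + g p.1 + η * ‖p.1‖ ^ 2

section Penalization

variable {ι : Type*} [Fintype ι] {ρ : (ι → ℂ) → ℝ} {D : Set (ι → ℂ)} {h : ℂ → ι → ℂ} {g : ℂ → ℝ}

lemma continuousOn_penalizedSum (hcont : ContinuousOn ρ D) {S : Set ℂ} {T : Set (ι → ℂ)}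
    (hh : ContinuousOn h S) (hg : ContinuousOn g S) (hD : ∀ z ∈ S, ∀ v ∈ T, h z + v ∈ D)
    (K η : ℝ) : ContinuousOn (penalizedSum ρ h g K η) (S ×ˢ T) := by
  have hfst : MapsTo Prod.fst (S ×ˢ T) S := fun p hp => hp.1
  have hsum : ContinuousOn (fun p : ℂ × (ι → ℂ) => h p.1 + p.2) (S ×ˢ T) :=
    (hh.comp continuousOn_fst hfst).add continuousOn_snd
  exact (((hcont.comp hsum fun p hp => hD _ hp.1 _ hp.2).sub (by fun_prop)).add
    (hg.comp continuousOn_fst hfst)).add (by fun_prop)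

-- If moving by `‖v‖ ≤ s` increases `ρ` by less than `γ`, the cost `γ / s ^ 2` rules out `‖v‖ = s`,
-- while `M + 2 * γ ≤ ρ (h z) + g z` and the weight `γ / R ^ 2` rule out the frontier of `U`.
theorem exists_isLocalMax_penalizedSum (hD : IsOpen D) (hcont : ContinuousOn ρ D) {U : Set ℂ}
    (hU : IsOpen U) (hUb : Bornology.IsBounded U) (hh : ContinuousOn h (closure U))
    (hmaps : MapsTo h (closure U) D) (hg : ContinuousOn g (closure U)) {M : ℝ}
    (hM : ∀ w ∈ frontier U, ρ (h w) + g w ≤ M) {z : ℂ} (hz : z ∈ closure U)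
    (hlt : M < ρ (h z) + g z) :
    ∃ K ≥ 0, ∃ η > 0, ∃ w ∈ U, ∃ v, h w + v ∈ D ∧
      IsLocalMax (penalizedSum ρ h g K η) (w, v) := by
  obtain ⟨γ, hγ, hMγ⟩ : ∃ γ > 0, M + 2 * γ = ρ (h z) + g z :=
    ⟨(ρ (h z) + g z - M) / 2, by linarith, by ring⟩
  have hUc : IsCompact (closure U) := hUb.isCompact_closure
  obtain ⟨s, hs, hnear⟩ := exists_pos_forall_norm_le_add_mem_and_lt hD hcont
    (hUc.image_of_continuousOn hh) hmaps.image_subset hγ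
  replace hnear := fun w hw => hnear (h w) (mem_image_of_mem h hw)
  obtain ⟨R, hR, hUR⟩ := hUb.closure.exists_pos_norm_le
  obtain ⟨⟨w, v⟩, ⟨hw, hv⟩, hmax⟩ := (hUc.prod (isCompact_closedBall 0 s)).exists_isMaxOn
    ⟨(z, 0), hz, mem_closedBall_self hs.le⟩
    (continuousOn_penalizedSum hcont hh hg
      (fun w hw v hv => (hnear w hw v (mem_closedBall_zero_iff.1 hv)).1) (γ / s ^ 2) (γ / R ^ 2))
  have unmoved_le : ∀ w' ∈ closure U, ρ (h w') + g w' + γ / R ^ 2 * ‖w'‖ ^ 2 ≤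
      ρ (h w + v) - γ / s ^ 2 * ∑ i, ‖v i‖ ^ 2 + g w + γ / R ^ 2 * ‖w‖ ^ 2 := fun w' hw' => by
    simpa [penalizedSum] using hmax (mk_mem_prod hw' (mem_closedBall_self hs.le))
  obtain ⟨hmem, hρ_lt⟩ := hnear w hw v (mem_closedBall_zero_iff.1 hv)
  have hvs : ‖v‖ < s := by
    refine (mem_closedBall_zero_iff.1 hv).lt_of_ne fun hvs => ?_
    have cost_ge : γ ≤ γ / s ^ 2 * ∑ i, ‖v i‖ ^ 2 := by
      calc γ = γ / s ^ 2 * ‖v‖ ^ 2 := by rw [hvs]; field_simp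
        _ ≤ γ / s ^ 2 * ∑ i, ‖v i‖ ^ 2 := by gcongr; exact pi_norm_sq_le_sum_norm_sq v
    linarith [unmoved_le w hw]
  have hwU : w ∈ U := by
    by_contra hwU
    have frontier_le := hM w (hU.frontier_eq ▸ ⟨hw, hwU⟩)
    have weight_le : γ / R ^ 2 * ‖w‖ ^ 2 ≤ γ := by
      calc γ / R ^ 2 * ‖w‖ ^ 2 ≤ γ / R ^ 2 * R ^ 2 := by gcongr; exact hUR w hw
        _ = γ := by field_simp
    have cost_nonneg : 0 ≤ γ / s ^ 2 * ∑ i, ‖v i‖ ^ 2 := by positivity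
    have weight_nonneg : 0 ≤ γ / R ^ 2 * ‖z‖ ^ 2 := by positivity
    linarith [unmoved_le z hz]
  exact ⟨γ / s ^ 2, by positivity, γ / R ^ 2, by positivity, w, hwU, v, hmem, hmax.isLocalMax <|
    prod_mem_nhds (mem_of_superset (hU.mem_nhds hwU) subset_closure)
      (closedBall_mem_nhds_of_mem (mem_ball_zero_iff.2 hvs))⟩

end Penalization

namespace PlurisubharmonicOn

variable {n : ℕ} {ρ : (Fin n → ℂ) → ℝ} {D : Set (Fin n → ℂ)}

lemma privalovSubharmonicAt_affine (hρ : PlurisubharmonicOn n ρ D) (hcont : ContinuousOn ρ D)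
    (hD : IsOpen D) {a : Fin n → ℂ} (ha : a ∈ D) (b : Fin n → ℂ) (z : ℂ) :
    PrivalovSubharmonicAt (fun w => ρ (a + (w - z) • b)) z := by
  have hline : Continuous fun w : ℂ => a + (w - z) • b := by fun_prop
  have hmem : ∀ᶠ w in 𝓝 z, a + (w - z) • b ∈ D :=
    hline.continuousAt.eventually_mem (hD.mem_nhds (by simpa using ha))
  intro η hη
  filter_upwards [eventually_forall_closedBall hmem, self_mem_nhdsWithin,
    eventually_circleIntegrable (hmem.mono fun w hw =>
      ContinuousAt.comp (f := fun w : ℂ => a + (w - z) • b)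
        (hcont.continuousAt (hD.mem_nhds hw)) hline.continuousAt)] with r hball hr hint
  have submean := hρ.2 a b r hr fun t ht => by
    simpa using hball (z + t) (by simpa using ht)
  have average_eq : circleAverage (fun w => ρ (a + (w - z) • b)) z r = 1 / (2 * Real.pi) *
      ∫ θ in (0 : ℝ)..(2 * Real.pi), ρ (a + ((r : ℂ) * exp (θ * I)) • b) := by
    simp [Real.circleAverage_def, circleMap]
  refine ⟨hint, ?_⟩
  simp only [sub_self, zero_smul, add_zero, average_eq]
  exact submean.trans (le_add_of_nonneg_right (by positivity))

-- Along `w ↦ (w, q w)` the point `h w + q w` runs through an affine disc, as the definition of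
-- plurisubharmonicity requires, and the cost of `q` has zero Laplacian at `z` because `q' z = 0`.
theorem not_isLocalMax_penalizedSum (hρ : PlurisubharmonicOn n ρ D) (hcont : ContinuousOn ρ D)
    (hD : IsOpen D) {h : ℂ → Fin n → ℂ} {g : ℂ → ℝ} {z : ℂ} {v : Fin n → ℂ} {K η : ℝ}
    (hh : AnalyticAt ℂ h z) (hg : HarmonicAt g z) (hz : h z + v ∈ D) (hK : 0 ≤ K) (hη : 0 < η) :
    ¬ IsLocalMax (penalizedSum ρ h g K η) (z, v) := by
  intro hmax
  let q : ℂ → Fin n → ℂ := fun w => h z + v + (w - z) • deriv h z - h w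
  have hqz : q z = v := by simp [q]
  have hq : AnalyticAt ℂ q z := by fun_prop
  have hq' : HasDerivAt q 0 z := by
    have hlin : HasDerivAt (fun w => h z + v + (w - z) • deriv h z) (deriv h z) z := by
      simpa using (((hasDerivAt_id z).sub_const z).smul_const (deriv h z)).const_add (h z + v)
    exact (hlin.sub hh.differentiableAt.hasDerivAt).congr_deriv (sub_self _)
  have penalty : PrivalovSubharmonicAt (fun w => K * ∑ i, -‖q w i‖ ^ 2) z := by
    exact .const_mul hK (.sum _ fun i _ => .neg_norm_sq_of_deriv_eq_zero
      (analyticAt_pi_iff.1 hq i) (hasDerivAt_pi.1 hq' i).deriv)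
  have subharmonic := ((hρ.privalovSubharmonicAt_affine hcont hD hz (deriv h z) z).add penalty).add
    (.of_harmonicAt hg)
  refine subharmonic.not_isLocalMax_add_norm_sq hη ?_
  have hcurve : ContinuousAt (fun w => (w, q w)) z := continuousAt_id.prodMk hq.continuousAt
  rw [← hqz] at hmax
  have along_curve : (fun w => ρ (h z + v + (w - z) • deriv h z) + K * ∑ i, -‖q w i‖ ^ 2 + g w +
      η * ‖w‖ ^ 2) = penalizedSum ρ h g K η ∘ fun w => (w, q w) := by
    ext w
    have affine : h w + q w = h z + v + (w - z) • deriv h z := add_sub_cancel _ _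
    simp only [Function.comp_apply, penalizedSum, affine, Finset.sum_neg_distrib]
    ring
  rw [along_curve]
  exact hmax.comp_tendsto (g := fun w => (w, q w)) (b := z) hcurve

theorem comp_add_le_of_frontier (hρ : PlurisubharmonicOn n ρ D) (hcont : ContinuousOn ρ D)
    (hD : IsOpen D) {U : Set ℂ} (hU : IsOpen U) (hUb : Bornology.IsBounded U)
    {h : ℂ → Fin n → ℂ} (hh : DiffContOnCl ℂ h U) (hmaps : MapsTo h (closure U) D)
    {g : ℂ → ℝ} (hg : HarmonicContOnCl g U) {M : ℝ}
    (hM : ∀ z ∈ frontier U, ρ (h z) + g z ≤ M) {z : ℂ} (hz : z ∈ closure U) :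
    ρ (h z) + g z ≤ M := by
  by_contra! hlt
  obtain ⟨K, hK, η, hη, w, hw, v, hmem, hmax⟩ := exists_isLocalMax_penalizedSum hD hcont hU hUb
    hh.continuousOn hmaps hg.continuousOn hM hz hlt
  exact hρ.not_isLocalMax_penalizedSum hcont hD (hh.differentiableOn.analyticAt (hU.mem_nhds hw))
    (hg.harmonicOnNhd w hw) hmem hK hη hmax

theorem comp_le_of_sphere_le (hρ : PlurisubharmonicOn n ρ D) (hcont : ContinuousOn ρ D)
    (hD : IsOpen D) {B : ℝ} (hB : ∀ x ∈ D, ρ x ≤ B) {h : ℂ → Fin n → ℂ}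
    (hdiff : DifferentiableOn ℂ h (ball 0 1 \ {0})) (hhc : ContinuousOn h puncturedDisc)
    (hmaps : MapsTo h puncturedDisc D) {M : ℝ} (hM : ∀ z ∈ sphere 0 1, ρ (h z) ≤ M)
    {z : ℂ} (hz : z ∈ puncturedDisc) : ρ (h z) ≤ M := by
  obtain hz1 | hz1 := (mem_closedBall_zero_iff.1 hz.1).eq_or_lt
  · exact hM z (by simpa using hz1)
  have hz0 : 0 < ‖z‖ := norm_pos_iff.2 hz.2
  have log_bound : ∀ ε > 0, ρ (h z) + ε * Real.log ‖z‖ ≤ M := by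
    intro ε hε
    obtain ⟨δ, hδB, hδ, hδz⟩ := ((Real.tendsto_log_nhdsGT_zero.const_mul_atBot hε
      |>.eventually_le_atBot (M - B)).and (Ioo_mem_nhdsGT hz0)).exists
    have hclosure : closure (ball (0 : ℂ) 1 \ closedBall 0 δ) ⊆ puncturedDisc :=
      (closure_ball_sdiff_closedBall_subset 0 δ 1).trans
        (sdiff_subset_sdiff_right (singleton_subset_iff.2 (mem_ball_self hδ)))
    refine hρ.comp_add_le_of_frontier hcont hD (g := ε • fun w => Real.log ‖w‖)
      (isOpen_ball.sdiff isClosed_closedBall) (isBounded_ball.subset sdiff_subset)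
      ⟨hdiff.mono ?_, hhc.mono hclosure⟩ (hmaps.mono_left hclosure) ?_ ?_
      (subset_closure ⟨by simpa using hz1, by simpa using hδz⟩)
    · exact sdiff_subset_sdiff_right (singleton_subset_iff.2 (mem_closedBall_self hδ.le))
    · refine (HarmonicOnNhd.harmonicContOnCl fun w hw => ?_).const_smul ε
      exact AnalyticAt.harmonicAt_log_norm analyticAt_id (hclosure hw).2
    · intro w hw
      obtain hw1 | hwδ := frontier_ball_sdiff_closedBall_subset 0 δ 1 hw
      · simpa [mem_sphere_zero_iff_norm.1 hw1] using hM w hw1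
      · have := hB _ (hmaps (hclosure (frontier_subset_closure hw)))
        simp only [Pi.smul_apply, smul_eq_mul, mem_sphere_zero_iff_norm.1 hwδ]
        linarith
  have hlim : Tendsto (fun ε => ρ (h z) + ε * Real.log ‖z‖) (𝓝[>] 0) (𝓝 (ρ (h z))) := by
    have : Continuous fun ε => ρ (h z) + ε * Real.log ‖z‖ := by fun_prop
    exact (this.tendsto' 0 _ (by simp)).mono_left nhdsWithin_le_nhds
  exact le_of_tendsto hlim (eventually_mem_nhdsWithin.mono log_bound)

end PlurisubharmonicOn

lemma continuousOn_of_isCompact_sublevel {X : Type*} [TopologicalSpace X] [T2Space X]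
    {D : Set X} {ρ : X → ℝ} (husc : UpperSemicontinuousOn ρ D) (hneg : ∀ x ∈ D, ρ x < 0)
    (hcomp : ∀ c < 0, IsCompact {x ∈ D | ρ x ≤ c}) : ContinuousOn ρ D := by
  refine continuousOn_iff_lower_upperSemicontinuousOn.2
    ⟨lowerSemicontinuousOn_iff_preimage_Iic.2 fun c => ?_, husc⟩
  obtain hc | hc := lt_or_ge c 0
  · exact ⟨_, (hcomp c hc).isClosed, by ext; simp⟩
  · refine ⟨univ, isClosed_univ, ?_⟩
    rw [inter_univ, inter_eq_left]
    exact fun x hx => (hneg x hx).le.trans hc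

lemma not_isCompact_puncturedDisc : ¬ IsCompact puncturedDisc := fun hcompact =>
  have hnear : ∀ᶠ z in 𝓝[≠] (0 : ℂ), z ∈ puncturedDisc :=
    sdiff_mem_nhdsWithin_compl (closedBall_mem_nhds 0 one_pos) _
  (hcompact.isClosed.mem_of_tendsto (tendsto_id'.2 nhdsWithin_le_nhds) hnear).2 rfl

theorem hyperconvex_not_hasPDP_general (n : ℕ) (D : Set (Fin n → ℂ)) (hD : IsOpen D)
    (hhyp : Hyperconvex n D) : ¬ HasPDP n D := by
  rintro ⟨h, hdiff, hhc, hmaps, hproper⟩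
  obtain ⟨ρ, hρ, hneg, hcomp⟩ := hhyp
  have hcont := continuousOn_of_isCompact_sublevel hρ.1 hneg hcomp
  have hsphere : sphere (0 : ℂ) 1 ⊆ puncturedDisc := fun z hz =>
    ⟨sphere_subset_closedBall hz, ne_of_mem_sphere hz one_ne_zero⟩
  obtain ⟨z₀, hz₀, hmax⟩ := (isCompact_sphere (0 : ℂ) 1).exists_isMaxOn
    (NormedSpace.sphere_nonempty.2 zero_le_one)
    (hcont.comp (hhc.mono hsphere) (hmaps.mono_left hsphere))
  have hle : ∀ z ∈ puncturedDisc, ρ (h z) ≤ ρ (h z₀) := fun z hz =>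
    hρ.comp_le_of_sphere_le hcont hD (fun x hx => (hneg x hx).le) hdiff hhc hmaps hmax hz
  have hpreimage := hproper _ (sep_subset _ _) (hcomp _ (hneg _ (hmaps (hsphere hz₀))))
  have preimage_eq : puncturedDisc ∩ h ⁻¹' {x ∈ D | ρ x ≤ ρ (h z₀)} = puncturedDisc :=
    inter_eq_left.2 fun z hz => ⟨hmaps hz, hle z hz⟩
  exact not_isCompact_puncturedDisc (preimage_eq ▸ hpreimage)

/-- a bounded hyperconvex domain does not have the punctured disc
property. -/
theorem hyperconvex_not_hasPDP (n : ℕ) (D : Set (Fin n → ℂ))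
    (hD : IsOpen D) (hDc : IsConnected D) (hDb : Bornology.IsBounded D)
    (hhyp : Hyperconvex n D) :
    ¬ HasPDP n D :=
  hyperconvex_not_hasPDP_general n D hD hhyp
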